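/- Let 0 ≠ μ ∈ V_n be a left Leibniz algebra structure on ℂ^n with M_μ = c·I + D for some c ∈ ℝ and some D ∈ Der(μ). If 0 ≠ X ∈ ℂ^n satisfies DX = aX with a < 0, then the right multiplication operator R^μ_X is not a derivation of μ, and moreover R^μ_X is not a normal operator: [R^μ_X, (R^μ_X)*] ≠ 0. -/

import Mathlib

/-!
The operator `M_μ` is the moment map of the action `A ↦ A.μ`: `tr (M_μ A) = 2 ⟪μ, A.μ⟫`
(`trace_Mmap_comp`). Since the adjoint of `A.·` is `A*.·`, a derivation `A` satisfies
`tr (M_μ [A, A*]) = 2 ‖A*.μ‖² ≥ 0` (`trace_Mmap_commutator_nonneg`). If moreover `[D, A] = a A`,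
then `tr (M_μ [A, A*]) = tr (D [A, A*]) = a tr (A A*)` (`trace_Mmap_commutator`), so `a < 0` forces
`A = 0` as soon as `A` is a derivation or is normal.

As `D` is a derivation with `D X = a X`, both `L_X` and `R_X` satisfy `[D, A] = a A`. The map `L_X`
is a derivation by the Leibniz identity, so `L_X = 0`. If `R_X` were a derivation or normal, then
`R_X = 0` too; in that case `⟪X, M_μ X⟫ = 2 ∑ ‖L_{e_i}* X‖² ≥ 0`, so `c + a ≥ 0` and hence `c > 0`.
But `tr (M_μ²) = c tr M_μ + tr (M_μ D) = -2 c ‖μ‖²` with `M_μ` Hermitian and `μ ≠ 0` gives `c ≤ 0`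
(`c_nonpos`), a contradiction.
-/

open scoped InnerProductSpace ComplexOrder
open LinearMap

noncomputable section

abbrev E (n : ℕ) := EuclideanSpace ℂ (Fin n)

abbrev Vb (n : ℕ) := E n →ₗ[ℂ] E n →ₗ[ℂ] E n

def e (n : ℕ) (i : Fin n) : E n := EuclideanSpace.single i 1

def Lop {n : ℕ} (μ : Vb n) (X : E n) : E n →ₗ[ℂ] E n := μ X

def Rop {n : ℕ} (μ : Vb n) (X : E n) : E n →ₗ[ℂ] E n := μ.flip X

def Mmap {n : ℕ} (μ : Vb n) : E n →ₗ[ℂ] E n :=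
  (2 : ℂ) • ∑ i, Lop μ (e n i) ∘ₗ adjoint (Lop μ (e n i))
  - (2 : ℂ) • ∑ i, adjoint (Lop μ (e n i)) ∘ₗ Lop μ (e n i)
  - (2 : ℂ) • ∑ i, adjoint (Rop μ (e n i)) ∘ₗ Rop μ (e n i)

/-- `A` is a derivation of `μ`. -/
def IsDer {n : ℕ} (μ : Vb n) (A : E n →ₗ[ℂ] E n) : Prop :=
  ∀ X Y, A (μ X Y) = μ (A X) Y + μ X (A Y)

def normSq {n : ℕ} (μ : Vb n) : ℝ :=
  ∑ i, ∑ j, ∑ k, ‖(⟪e n k, μ (e n i) (e n j)⟫_ℂ : ℂ)‖ ^ 2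

/-- `μ` is a left Leibniz algebra structure. -/
def IsLeftLeibniz {n : ℕ} (μ : Vb n) : Prop :=
  ∀ x y z : E n, μ x (μ y z) = μ (μ x y) z + μ y (μ x z)

/-- `μ` is a symmetric Leibniz algebra structure. -/
def IsSymLeibniz {n : ℕ} (μ : Vb n) : Prop :=
  IsLeftLeibniz μ ∧ ∀ x y z : E n, μ (μ x y) z = μ (μ x z) y + μ x (μ y z)

/-- The infinitesimal action `A.μ` of endomorphisms on bilinear maps. -/
def act {n : ℕ} (A : E n →ₗ[ℂ] E n) (μ : Vb n) : Vb n :=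
  μ.compr₂ A - μ.comp A - μ.compl₂ A

/-- The standard Hermitian inner product on bilinear maps, conjugate-linear in the first slot. -/
def bInner {n : ℕ} (μ ν : Vb n) : ℂ :=
  ∑ i, ∑ j, ⟪μ (e n i) (e n j), ν (e n i) (e n j)⟫_ℂ

lemma act_apply {n : ℕ} (A : E n →ₗ[ℂ] E n) (μ : Vb n) (x y : E n) :
    act A μ x y = A (μ x y) - μ (A x) y - μ x (A y) := by
  simp [act]

lemma act_eq_zero {n : ℕ} {A : E n →ₗ[ℂ] E n} {μ : Vb n} (h : IsDer μ A) : act A μ = 0 := by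
  refine LinearMap.ext fun x => LinearMap.ext fun y => ?_
  rw [act_apply, h x y]
  simp

lemma act_commutator {n : ℕ} (A B : E n →ₗ[ℂ] E n) (μ : Vb n) :
    act (A ∘ₗ B - B ∘ₗ A) μ = act A (act B μ) - act B (act A μ) := by
  refine LinearMap.ext fun x => LinearMap.ext fun y => ?_
  simp only [act_apply, LinearMap.sub_apply, LinearMap.comp_apply, map_sub]
  abel

lemma trace_eq_sum {n : ℕ} (T : E n →ₗ[ℂ] E n) :
    LinearMap.trace ℂ (E n) T = ∑ i, ⟪e n i, T (e n i)⟫_ℂ := by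
  rw [LinearMap.trace_eq_sum_inner T (EuclideanSpace.basisFun (Fin n) ℂ)]
  simp [e]

/-- Both sides are the trace of `F* G A`. -/
lemma sum_inner_adjoint {n : ℕ} (F G A : E n →ₗ[ℂ] E n) :
    ∑ i, ⟪F (adjoint A (e n i)), G (e n i)⟫_ℂ = ∑ i, ⟪F (e n i), G (A (e n i))⟫_ℂ := by
  have h := LinearMap.trace_comp_comm' (adjoint F ∘ₗ G) A
  rw [trace_eq_sum, trace_eq_sum] at h
  simpa [LinearMap.adjoint_inner_right, ← LinearMap.adjoint_inner_left A] using h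

lemma bInner_act_adjoint {n : ℕ} (A : E n →ₗ[ℂ] E n) (μ ν : Vb n) :
    bInner (act (adjoint A) μ) ν = bInner μ (act A ν) := by
  have h1 : ∑ i, ∑ j, ⟪μ (adjoint A (e n i)) (e n j), ν (e n i) (e n j)⟫_ℂ
      = ∑ i, ∑ j, ⟪μ (e n i) (e n j), ν (A (e n i)) (e n j)⟫_ℂ := by
    rw [Finset.sum_comm, Finset.sum_comm (f := fun i j =>
      ⟪μ (e n i) (e n j), ν (A (e n i)) (e n j)⟫_ℂ)]
    exact Finset.sum_congr rfl fun j _ =>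
      sum_inner_adjoint (μ.flip (e n j)) (ν.flip (e n j)) A
  have h2 : ∑ i, ∑ j, ⟪μ (e n i) (adjoint A (e n j)), ν (e n i) (e n j)⟫_ℂ
      = ∑ i, ∑ j, ⟪μ (e n i) (e n j), ν (e n i) (A (e n j))⟫_ℂ :=
    Finset.sum_congr rfl fun i _ => sum_inner_adjoint (μ (e n i)) (ν (e n i)) A
  simp only [bInner, act_apply, inner_sub_left, inner_sub_right, Finset.sum_sub_distrib,
    LinearMap.adjoint_inner_left, h1, h2]

lemma bInner_self {n : ℕ} (μ : Vb n) :
    bInner μ μ = ((∑ i, ∑ j, ‖μ (e n i) (e n j)‖ ^ 2 : ℝ) : ℂ) := by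
  simp [bInner, inner_self_eq_norm_sq_to_K]

lemma bInner_self_re_nonneg {n : ℕ} (μ : Vb n) : 0 ≤ (bInner μ μ).re := by
  rw [bInner_self, Complex.ofReal_re]
  positivity

lemma ext_e {n : ℕ} {F : Type*} [AddCommMonoid F] [Module ℂ F] {f g : E n →ₗ[ℂ] F}
    (h : ∀ i, f (e n i) = g (e n i)) : f = g := by
  refine (EuclideanSpace.basisFun (Fin n) ℂ).toBasis.ext fun i => ?_
  simpa [e] using h i

lemma bInner_self_re_pos {n : ℕ} {μ : Vb n} (hμ : μ ≠ 0) : 0 < (bInner μ μ).re := by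
  refine lt_of_le_of_ne (bInner_self_re_nonneg μ) fun h => hμ ?_
  rw [bInner_self, Complex.ofReal_re, eq_comm,
    Finset.sum_eq_zero_iff_of_nonneg (fun _ _ => by positivity)] at h
  refine ext_e fun i => ext_e fun j => ?_
  have hi := h i (Finset.mem_univ i)
  rw [Finset.sum_eq_zero_iff_of_nonneg (fun _ _ => by positivity)] at hi
  simpa using hi j (Finset.mem_univ j)

/-- `M_μ` is, up to the factor `2`, the moment map of the action on bilinear maps. -/
lemma trace_Mmap_comp {n : ℕ} (μ : Vb n) (A : E n →ₗ[ℂ] E n) :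
    LinearMap.trace ℂ (E n) (Mmap μ ∘ₗ A) = 2 * bInner μ (act A μ) := by
  have h1 : ∀ i, LinearMap.trace ℂ (E n) ((Lop μ (e n i) ∘ₗ adjoint (Lop μ (e n i))) ∘ₗ A)
      = ∑ j, ⟪μ (e n i) (e n j), A (μ (e n i) (e n j))⟫_ℂ := fun i => by
    rw [LinearMap.comp_assoc, LinearMap.trace_comp_comm', trace_eq_sum]
    simp [LinearMap.adjoint_inner_right, Lop]
  have h2 : ∀ i, LinearMap.trace ℂ (E n) ((adjoint (Lop μ (e n i)) ∘ₗ Lop μ (e n i)) ∘ₗ A)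
      = ∑ j, ⟪μ (e n i) (e n j), μ (e n i) (A (e n j))⟫_ℂ := fun i => by
    rw [trace_eq_sum]
    simp [LinearMap.adjoint_inner_right, Lop]
  have h3 : ∀ i, LinearMap.trace ℂ (E n) ((adjoint (Rop μ (e n i)) ∘ₗ Rop μ (e n i)) ∘ₗ A)
      = ∑ j, ⟪μ (e n j) (e n i), μ (A (e n j)) (e n i)⟫_ℂ := fun i => by
    rw [trace_eq_sum]
    simp [LinearMap.adjoint_inner_right, Rop]
  have hsum : ∀ f : Fin n → E n →ₗ[ℂ] E n, (∑ i, f i) ∘ₗ A = ∑ i, f i ∘ₗ A := fun f =>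
    LinearMap.ext fun x => by simp
  simp only [Mmap, LinearMap.sub_comp, LinearMap.smul_comp, hsum, map_sub, map_smul,
    map_sum, h1, h2, h3, smul_eq_mul, bInner, act_apply, inner_sub_right, Finset.sum_sub_distrib]
  rw [Finset.sum_comm (f := fun i j => ⟪μ (e n j) (e n i), μ (A (e n j)) (e n i)⟫_ℂ)]
  ring

lemma trace_Mmap_commutator_nonneg {n : ℕ} {μ : Vb n} {A : E n →ₗ[ℂ] E n} (hA : IsDer μ A) :
    0 ≤ (LinearMap.trace ℂ (E n) (Mmap μ ∘ₗ (A ∘ₗ adjoint A - adjoint A ∘ₗ A))).re := by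
  have h : bInner μ (act (A ∘ₗ adjoint A - adjoint A ∘ₗ A) μ)
      = bInner (act (adjoint A) μ) (act (adjoint A) μ) := by
    rw [act_commutator, act_eq_zero hA, bInner_act_adjoint]
    congr 1
    refine LinearMap.ext fun x => LinearMap.ext fun y => ?_
    simp [act_apply]
  rw [trace_Mmap_comp, h]
  have := bInner_self_re_nonneg (act (adjoint A) μ)
  simpa using this

lemma trace_Mmap_commutator {n : ℕ} {μ : Vb n} {c : ℝ} {D A : E n →ₗ[ℂ] E n}
    (hM : Mmap μ = (c : ℂ) • (LinearMap.id : E n →ₗ[ℂ] E n) + D) {a : ℝ}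
    (hDA : D ∘ₗ A - A ∘ₗ D = (a : ℂ) • A) :
    LinearMap.trace ℂ (E n) (Mmap μ ∘ₗ (A ∘ₗ adjoint A - adjoint A ∘ₗ A))
      = a * LinearMap.trace ℂ (E n) (A ∘ₗ adjoint A) := by
  have h1 := LinearMap.trace_comp_comm' A (adjoint A)
  have h2 := LinearMap.trace_comp_comm' (D ∘ₗ adjoint A) A
  have h3 := congrArg (fun T => LinearMap.trace ℂ (E n) (T ∘ₗ adjoint A)) hDA
  simp only [LinearMap.sub_comp, LinearMap.smul_comp, map_sub, map_smul, smul_eq_mul,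
    LinearMap.comp_assoc] at h1 h2 h3
  rw [hM]
  simp only [LinearMap.add_comp, LinearMap.comp_sub, LinearMap.smul_comp, map_sub, map_add,
    map_smul, smul_eq_mul, LinearMap.id_comp]
  rw [h1, ← h3, h2]
  ring

lemma trace_adjoint_comp_self {n : ℕ} (A : E n →ₗ[ℂ] E n) :
    LinearMap.trace ℂ (E n) (adjoint A ∘ₗ A) = ((∑ i, ‖A (e n i)‖ ^ 2 : ℝ) : ℂ) := by
  rw [trace_eq_sum]
  simp [LinearMap.adjoint_inner_right, inner_self_eq_norm_sq_to_K]

lemma eq_zero_of_trace_nonneg {n : ℕ} {μ : Vb n} {c : ℝ} {D A : E n →ₗ[ℂ] E n}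
    (hM : Mmap μ = (c : ℂ) • (LinearMap.id : E n →ₗ[ℂ] E n) + D) {a : ℝ} (ha : a < 0)
    (hDA : D ∘ₗ A - A ∘ₗ D = (a : ℂ) • A)
    (h : 0 ≤ (LinearMap.trace ℂ (E n) (Mmap μ ∘ₗ (A ∘ₗ adjoint A - adjoint A ∘ₗ A))).re) :
    A = 0 := by
  rw [trace_Mmap_commutator hM hDA, LinearMap.trace_comp_comm', trace_adjoint_comp_self,
    ← Complex.ofReal_mul, Complex.ofReal_re] at h
  have h0 : 0 ≤ ∑ i, ‖A (e n i)‖ ^ 2 := by positivity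
  have h1 : ∑ i, ‖A (e n i)‖ ^ 2 = 0 := by nlinarith
  rw [Finset.sum_eq_zero_iff_of_nonneg (fun _ _ => by positivity)] at h1
  exact ext_e fun i => by simpa using h1 i (Finset.mem_univ i)

lemma adjoint_Mmap {n : ℕ} (μ : Vb n) : adjoint (Mmap μ) = Mmap μ := by
  simp [Mmap, LinearMap.adjoint_comp, map_smulₛₗ, Complex.conj_ofNat]

/-- The constant `c` is nonpositive because `tr (M_μ* M_μ) = c tr M_μ = -2 c ‖μ‖²`. -/
lemma c_nonpos {n : ℕ} {μ : Vb n} (hμ : μ ≠ 0) {c : ℝ} {D : E n →ₗ[ℂ] E n} (hDer : IsDer μ D)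
    (hM : Mmap μ = (c : ℂ) • (LinearMap.id : E n →ₗ[ℂ] E n) + D) : c ≤ 0 := by
  have hpos := bInner_self_re_pos hμ
  have hid : act LinearMap.id μ = -μ := by
    refine LinearMap.ext fun x => LinearMap.ext fun y => ?_
    simp [act_apply]
  have h1 : LinearMap.trace ℂ (E n) (Mmap μ ∘ₗ Mmap μ) = -(2 * c) * bInner μ μ := by
    nth_rewrite 2 [hM]
    rw [LinearMap.comp_add, LinearMap.comp_smul, map_add, map_smul, trace_Mmap_comp,
      trace_Mmap_comp, act_eq_zero hDer, hid]
    simp [bInner]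
    ring
  have h2 := trace_adjoint_comp_self (Mmap μ)
  rw [adjoint_Mmap, h1, bInner_self] at h2
  rw [bInner_self, Complex.ofReal_re] at hpos
  norm_cast at h2
  have h3 : 0 ≤ ∑ i, ‖Mmap μ (e n i)‖ ^ 2 := by positivity
  rw [← h2] at h3
  nlinarith

/-- A vector annihilated by multiplication on both sides has nonnegative `M_μ`-value. -/
lemma inner_Mmap_nonneg {n : ℕ} {μ : Vb n} {X : E n} (hL : Lop μ X = 0) (hR : Rop μ X = 0) :
    0 ≤ (⟪X, Mmap μ X⟫_ℂ).re := by
  have hL' : ∀ y, μ X y = 0 := fun y => LinearMap.congr_fun hL y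
  have hR' : ∀ y, μ y X = 0 := fun y => LinearMap.congr_fun hR y
  have h : ⟪X, Mmap μ X⟫_ℂ = ((2 * ∑ i, ‖adjoint (Lop μ (e n i)) X‖ ^ 2 : ℝ) : ℂ) := by
    have h1 : ∀ i, Lop μ (e n i) X = 0 := fun i => hR' _
    have h2 : ∀ i, Rop μ (e n i) X = 0 := fun i => hL' _
    simp only [Mmap, LinearMap.sub_apply, LinearMap.smul_apply, LinearMap.sum_apply,
      LinearMap.comp_apply, h1, h2, map_zero, Finset.sum_const_zero, smul_zero, sub_zero,
      inner_smul_right, inner_sum, ← LinearMap.adjoint_inner_left, inner_self_eq_norm_sq_to_K]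
    simp
  rw [h, Complex.ofReal_re]
  positivity

/-- If `0 ≠ μ` is a left Leibniz structure with `M_μ = c·I + D`, `D ∈ Der(μ)`, and
`0 ≠ X` satisfies `DX = aX` with `a < 0`, then `R^μ_X` is not a derivation of `μ`
and `R^μ_X` is not normal: `[R^μ_X,(R^μ_X)*] ≠ 0`. -/
theorem negative_eigenvector_Rop {n : ℕ} (μ : Vb n) (hμ : μ ≠ 0)
    (hleib : IsLeftLeibniz μ)
    (c : ℝ) (D : E n →ₗ[ℂ] E n) (hDer : IsDer μ D)
    (hM : Mmap μ = (c : ℂ) • (LinearMap.id : E n →ₗ[ℂ] E n) + D)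
    (X : E n) (hX : X ≠ 0) (a : ℝ) (ha : a < 0) (hDX : D X = (a : ℂ) • X) :
    ¬ IsDer μ (Rop μ X) ∧
    Rop μ X ∘ₗ adjoint (Rop μ X) - adjoint (Rop μ X) ∘ₗ Rop μ X ≠ 0 := by
  have hDL : D ∘ₗ Lop μ X - Lop μ X ∘ₗ D = (a : ℂ) • Lop μ X := by
    refine LinearMap.ext fun y => ?_
    simp [Lop, hDer X y, hDX]
  have hDR : D ∘ₗ Rop μ X - Rop μ X ∘ₗ D = (a : ℂ) • Rop μ X := by
    refine LinearMap.ext fun y => ?_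
    simp [Rop, hDer y X, hDX]
  have hL : Lop μ X = 0 := eq_zero_of_trace_nonneg hM ha hDL
    (trace_Mmap_commutator_nonneg fun y z => hleib X y z)
  have hR : Rop μ X ≠ 0 := fun hR => by
    have hc := c_nonpos hμ hDer hM
    have h := inner_Mmap_nonneg hL hR
    have hMX : Mmap μ X = ((c + a : ℝ) : ℂ) • X := by
      rw [hM]
      simp [hDX, add_smul]
    rw [hMX, inner_smul_right, inner_self_eq_norm_sq_to_K] at h
    have hXpos : 0 < ‖X‖ ^ 2 := by positivity
    have h' : 0 ≤ (c + a) * ‖X‖ ^ 2 := by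
      rw [← Complex.ofReal_re ((c + a) * ‖X‖ ^ 2), Complex.ofReal_mul, Complex.ofReal_pow]
      exact h
    nlinarith
  refine ⟨fun h => hR ?_, fun h => hR ?_⟩
  · exact eq_zero_of_trace_nonneg hM ha hDR (trace_Mmap_commutator_nonneg h)
  · exact eq_zero_of_trace_nonneg hM ha hDR (by simp [h])
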